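/- Let n, r be positive integers with r ≤ n, let F be a maximal intersecting family of r-element subsets of [n], and let y ∈ [n]. Define F₁ = {F ∈ F : there exists x ∈ F such that (F \ {x}) ∩ F′ ≠ ∅ for every F′ ∈ F}. Then |F₁| ≤ (n − r + 1) · d_F(y), where d_F(y) is the number of members of F containing y. -/

import Mathlib

/-- The degree of `x` in the family `F`: the number of members of `F` containing `x`. -/
def degree (F : Finset (Finset ℕ)) (x : ℕ) : ℕ := (F.filter (fun A => x ∈ A)).card

/-- `F` is an intersecting family: any two members have nonempty intersection. -/
def IsIntersecting (F : Finset (Finset ℕ)) : Prop :=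
  ∀ A ∈ F, ∀ B ∈ F, (A ∩ B).Nonempty

/-- `F` is a family of `r`-element subsets of `[n] = {1,…,n}`. -/
def IsFamily (n r : ℕ) (F : Finset (Finset ℕ)) : Prop :=
  ∀ A ∈ F, A ⊆ Finset.Icc 1 n ∧ A.card = r

/-- `F` is a maximal intersecting family of `r`-subsets of `[n]`: it is intersecting and
every `r`-subset of `[n]` not in `F` is disjoint from some member of `F`. -/
def IsMaxIntersecting (n r : ℕ) (F : Finset (Finset ℕ)) : Prop :=
  IsIntersecting F ∧
    ∀ G : Finset ℕ, G ⊆ Finset.Icc 1 n → G.card = r → G ∉ F → ∃ A ∈ F, A ∩ G = ∅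

/-- `∪F = [n]`: every element of `[n]` lies in some member of `F`. -/
def Covers (n : ℕ) (F : Finset (Finset ℕ)) : Prop :=
  ∀ x ∈ Finset.Icc 1 n, ∃ A ∈ F, x ∈ A

/-- `Δ(F)`: the maximum degree over `x ∈ [n]`. -/
noncomputable def maxDeg (n : ℕ) (F : Finset (Finset ℕ)) : ℕ :=
  sSup (degree F '' Set.Icc 1 n)

/-- `δ(F)`: the minimum degree over `x ∈ [n]`. -/
noncomputable def minDeg (n : ℕ) (F : Finset (Finset ℕ)) : ℕ :=
  sInf (degree F '' Set.Icc 1 n)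

/-!
If `A \ {x}` meets every member of `F`, then so does `(A \ {x}) ∪ {y}`, which therefore lies in `F`
by maximality. So every `A ∈ F₁` arises from some `B ∈ F` containing `y` by replacing `y` with a
point outside `B \ {y}`, and each `B` offers only `n - r + 1` such replacements.
-/

section Transversal

variable {α : Type*} [DecidableEq α] {F : Finset (Finset α)} {A B T U V : Finset α}
  {r : ℕ} {x y : α}

/-- `T` is a transversal of the family `F`: it meets every member of `F`. It is reducible so that
decidability of the condition is found by instance search. -/
abbrev IsTransversal (F : Finset (Finset α)) (T : Finset α) : Prop :=
  ∀ B ∈ F, (T ∩ B).Nonempty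

theorem IsTransversal.mono (hT : IsTransversal F T) (hTU : T ⊆ U) : IsTransversal F U :=
  fun B hB => (hT B hB).mono (Finset.inter_subset_inter_right hTU)

/-- The sets obtained from `B` by replacing its element `y` with a point of the ground set `V`
outside `B \ {y}`; the point `y` is allowed, so `B` itself is one of them when `y ∈ V`. -/
def replacements (V B : Finset α) (y : α) : Finset (Finset α) :=
  (V \ B.erase y).image (insert · (B.erase y))

theorem card_replacements (hBV : B ⊆ V) (hyB : y ∈ B) :
    (replacements V B y).card = V.card - B.card + 1 := by
  have h_inj : Set.InjOn (insert · (B.erase y)) (V \ B.erase y : Finset α) :=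
    (Finset.insert_inj_on (B.erase y)).mono fun _ hx => (Finset.mem_sdiff.mp hx).2
  have h_card_le : B.card ≤ V.card := Finset.card_le_card hBV
  have h_card_pos : 0 < B.card := Finset.card_pos.mpr ⟨y, hyB⟩
  rw [replacements, Finset.card_image_of_injOn h_inj,
    Finset.card_sdiff_of_subset ((Finset.erase_subset y B).trans hBV),
    Finset.card_erase_of_mem hyB]
  omega

theorem self_mem_replacements (hyV : y ∈ V) (hyB : y ∈ B) : B ∈ replacements V B y :=
  Finset.mem_image.mpr
    ⟨y, Finset.mem_sdiff.mpr ⟨hyV, Finset.notMem_erase y B⟩, Finset.insert_erase hyB⟩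

theorem mem_replacements_insert_erase (hxV : x ∈ V) (hxA : x ∈ A) (hyA : y ∉ A) :
    A ∈ replacements V (insert y (A.erase x)) y := by
  have h_erase : (insert y (A.erase x)).erase y = A.erase x :=
    Finset.erase_insert fun hy => hyA (Finset.mem_of_mem_erase hy)
  rw [replacements, h_erase]
  exact Finset.mem_image.mpr
    ⟨x, Finset.mem_sdiff.mpr ⟨hxV, Finset.notMem_erase x A⟩, Finset.insert_erase hxA⟩

theorem insert_erase_mem_powersetCard (hA : A ∈ V.powersetCard r) (hxA : x ∈ A) (hyV : y ∈ V)
    (hyA : y ∉ A) : insert y (A.erase x) ∈ V.powersetCard r := by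
  obtain ⟨hAV, hA_card⟩ := Finset.mem_powersetCard.mp hA
  refine Finset.mem_powersetCard.mpr
    ⟨Finset.insert_subset hyV ((Finset.erase_subset x A).trans hAV), ?_⟩
  rw [Finset.card_insert_of_notMem fun hy => hyA (Finset.mem_of_mem_erase hy),
    Finset.card_erase_add_one hxA, hA_card]

theorem exists_mem_replacements (hF : F ⊆ V.powersetCard r)
    (hF_max : ∀ T ∈ V.powersetCard r, IsTransversal F T → T ∈ F) (hyV : y ∈ V)
    (hA : A ∈ F) (hxA : x ∈ A) (hAx : IsTransversal F (A \ {x})) :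
    ∃ B ∈ F, y ∈ B ∧ A ∈ replacements V B y := by
  by_cases hyA : y ∈ A
  · exact ⟨A, hA, hyA, self_mem_replacements hyV hyA⟩
  · have h_trans : IsTransversal F (insert y (A.erase x)) := by
      rw [← Finset.sdiff_singleton_eq_erase]
      exact hAx.mono (Finset.subset_insert y _)
    have h_mem : insert y (A.erase x) ∈ F :=
      hF_max _ (insert_erase_mem_powersetCard (hF hA) hxA hyV hyA) h_trans
    have hxV : x ∈ V := (Finset.mem_powersetCard.mp (hF hA)).1 hxA
    exact ⟨_, h_mem, Finset.mem_insert_self y _, mem_replacements_insert_erase hxV hxA hyA⟩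

theorem card_F1_le_general (hF : F ⊆ V.powersetCard r)
    (hF_max : ∀ T ∈ V.powersetCard r, IsTransversal F T → T ∈ F) (hyV : y ∈ V) :
    (F.filter (fun A => ∃ x ∈ A, IsTransversal F (A \ {x}))).card ≤
      (V.card - r + 1) * (F.filter (fun A => y ∈ A)).card := by
  have h_cover : F.filter (fun A => ∃ x ∈ A, IsTransversal F (A \ {x})) ⊆
      (F.filter (fun B => y ∈ B)).biUnion (replacements V · y) := by
    intro A hA
    obtain ⟨hAF, x, hxA, hAx⟩ := Finset.mem_filter.mp hA
    obtain ⟨B, hB, hyB, hAB⟩ := exists_mem_replacements hF hF_max hyV hAF hxA hAx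
    exact Finset.mem_biUnion.mpr ⟨B, Finset.mem_filter.mpr ⟨hB, hyB⟩, hAB⟩
  have h_fiber : ∀ B ∈ F.filter (fun B => y ∈ B),
      (replacements V B y).card ≤ V.card - r + 1 := by
    intro B hB
    obtain ⟨hBF, hyB⟩ := Finset.mem_filter.mp hB
    obtain ⟨hBV, rfl⟩ := Finset.mem_powersetCard.mp (hF hBF)
    exact (card_replacements hBV hyB).le
  calc (F.filter (fun A => ∃ x ∈ A, IsTransversal F (A \ {x}))).card
      ≤ ((F.filter (fun B => y ∈ B)).biUnion (replacements V · y)).card :=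
        Finset.card_le_card h_cover
    _ ≤ (F.filter (fun B => y ∈ B)).card * (V.card - r + 1) :=
        Finset.card_biUnion_le_card_mul _ _ _ h_fiber
    _ = (V.card - r + 1) * (F.filter (fun B => y ∈ B)).card := mul_comm _ _

end Transversal

theorem IsFamily.subset_powersetCard {n r : ℕ} {F : Finset (Finset ℕ)} (hF : IsFamily n r F) :
    F ⊆ (Finset.Icc 1 n).powersetCard r :=
  fun A hA => Finset.mem_powersetCard.mpr (hF A hA)

theorem IsMaxIntersecting.mem_of_isTransversal {n r : ℕ} {F : Finset (Finset ℕ)}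
    (hF : IsMaxIntersecting n r F) {T : Finset ℕ} (hT : T ∈ (Finset.Icc 1 n).powersetCard r)
    (hT_trans : IsTransversal F T) : T ∈ F := by
  by_contra hTF
  obtain ⟨hTn, hT_card⟩ := Finset.mem_powersetCard.mp hT
  obtain ⟨B, hB, h_disj⟩ := hF.2 T hTn hT_card hTF
  exact (hT_trans B hB).ne_empty (Finset.inter_comm T B ▸ h_disj)

/-- For a maximal intersecting family `F` of `r`-subsets of `[n]` and any
`y ∈ [n]`, the subfamily `F₁ = {F ∈ F : ∃ x ∈ F, ∀ F' ∈ F, (F \ {x}) ∩ F' ≠ ∅}`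
has at most `(n − r + 1)·d_F(y)` members. -/
theorem card_F1_le (n r : ℕ) (hr : 1 ≤ r) (hrn : r ≤ n)
    (F : Finset (Finset ℕ)) (hfam : IsFamily n r F) (hmax : IsMaxIntersecting n r F)
    (y : ℕ) (hy : y ∈ Finset.Icc 1 n) :
    (F.filter (fun A => ∃ x ∈ A, ∀ B ∈ F, ((A \ {x}) ∩ B).Nonempty)).card ≤
      (n - r + 1) * degree F y := by
  simpa only [Nat.card_Icc, Nat.add_sub_cancel, IsTransversal, degree] using
    card_F1_le_general hfam.subset_powersetCard (fun _ => hmax.mem_of_isTransversal) hy
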